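/- arXiv:2409.19433 — 3 statements merged into one kernel-verified Lean document; each statement's English description precedes it below -/
import Mathlib

section
/- Let E be a real inner product space, let a ∈ E with a ≠ 0, and let p, x ∈ E be such that x − p is not a scalar multiple of a. Set y* = x − (⟪a, x − p⟫ / ‖a‖²) • a. Then y* lies in the hyperplane H = {y ∈ E : ⟪a, y − p⟫ = 0}, y* ≠ p, and for every y ∈ H with y ≠ p one has ⟪x − p, y − p⟫ / (‖x − p‖ · ‖y − p‖) ≤ ⟪x − p, y* − p⟫ / (‖x − p‖ · ‖y* − p‖). That is, among points of the hyperplane distinct from p, the orthogonal projection y* maximizes the cosine of the angle at p between x − p and y − p. -/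
open RealInnerProductSpace

/-!
The vectors `v` of a subspace `K` see only the orthogonal projection `w` of `u` onto `K`:
`⟪u, v⟫ = ⟪w, v⟫`. By Cauchy-Schwarz, the cosine of the angle between `u` and `v` is therefore at
most `‖w‖ / ‖u‖`, and `v = w` attains this bound. The theorem is the case `K = (ℝ ∙ a)ᗮ` and
`u = x - p`.
-/

section OrthogonalProjection

open Submodule

variable {𝕜 E : Type*} [RCLike 𝕜] [NormedAddCommGroup E] [InnerProductSpace 𝕜 E]

lemma inner_starProjection_left_of_mem (K : Submodule 𝕜 E) [K.HasOrthogonalProjection] (u : E)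
    {v : E} (hv : v ∈ K) : inner 𝕜 (K.starProjection u) v = inner 𝕜 u v := by
  rw [K.inner_starProjection_left_eq_right, starProjection_eq_self_iff.mpr hv]

lemma starProjection_orthogonal_eq_zero_iff {K : Submodule 𝕜 E} [K.HasOrthogonalProjection]
    {u : E} : Kᗮ.starProjection u = 0 ↔ u ∈ K := by
  rw [starProjection_orthogonal_val, sub_eq_zero, eq_comm, starProjection_eq_self_iff]

lemma starProjection_orthogonal_singleton (a u : E) :
    (𝕜 ∙ a)ᗮ.starProjection u = u - (inner 𝕜 a u / (‖a‖ : 𝕜) ^ 2) • a := by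
  rw [starProjection_orthogonal_val, starProjection_singleton, RCLike.ofReal_pow]

end OrthogonalProjection

section Angle

open InnerProductGeometry

variable {E : Type*} [NormedAddCommGroup E] [InnerProductSpace ℝ E]
  (K : Submodule ℝ E) [K.HasOrthogonalProjection]

lemma cos_angle_le_norm_starProjection_div_norm (u : E) {v : E} (hv : v ∈ K) :
    Real.cos (angle u v) ≤ ‖K.starProjection u‖ / ‖u‖ :=
  calc Real.cos (angle u v)
      = ⟪K.starProjection u, v⟫ / (‖u‖ * ‖v‖) := by
        rw [cos_angle, inner_starProjection_left_of_mem K u hv]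
    _ ≤ ‖K.starProjection u‖ * ‖v‖ / (‖u‖ * ‖v‖) := by
        gcongr
        exact real_inner_le_norm _ _
    _ ≤ ‖K.starProjection u‖ / ‖u‖ := mul_div_mul_right_le (by positivity)

lemma cos_angle_starProjection (u : E) :
    Real.cos (angle u (K.starProjection u)) = ‖K.starProjection u‖ / ‖u‖ := by
  rw [cos_angle, ← inner_starProjection_left_of_mem K u (K.starProjection_apply_mem u),
    real_inner_self_eq_norm_mul_norm, mul_comm ‖u‖, ← div_div, mul_self_div_self]

lemma cos_angle_le_cos_angle_starProjection (u : E) {v : E} (hv : v ∈ K) :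
    Real.cos (angle u v) ≤ Real.cos (angle u (K.starProjection u)) :=
  (cos_angle_le_norm_starProjection_div_norm K u hv).trans_eq (cos_angle_starProjection K u).symm

end Angle

/-- **The orthogonal projection maximizes the cosine of the angle at `p`.**
If `x - p` is not a scalar multiple of `a ≠ 0`, then
`y* = x - (⟪a, x - p⟫ / ‖a‖²) • a` lies in the hyperplane
`H = {y | ⟪a, y - p⟫ = 0}`, satisfies `y* ≠ p`, and maximizes
`⟪x - p, y - p⟫ / (‖x - p‖ ⬝ ‖y - p‖)` over `y ∈ H`, `y ≠ p`. -/
theorem projection_maximizes_cosine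
    {E : Type*} [NormedAddCommGroup E] [InnerProductSpace ℝ E]
    (a p x : E) (ha : a ≠ 0) (hxp : ∀ c : ℝ, x - p ≠ c • a)
    (ystar : E) (hystar : ystar = x - (⟪a, x - p⟫ / ‖a‖ ^ 2) • a) :
    ⟪a, ystar - p⟫ = 0 ∧ ystar ≠ p ∧
      ∀ y : E, ⟪a, y - p⟫ = 0 → y ≠ p →
        ⟪x - p, y - p⟫ / (‖x - p‖ * ‖y - p‖) ≤
          ⟪x - p, ystar - p⟫ / (‖x - p‖ * ‖ystar - p‖) := by
  have ystar_sub : ystar - p = (ℝ ∙ a)ᗮ.starProjection (x - p) := by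
    rw [hystar, starProjection_orthogonal_singleton, sub_right_comm, RCLike.ofReal_real_eq_id, id]
  rw [← sub_ne_zero (a := ystar), ystar_sub]
  refine ⟨?_, ?_, fun y hy _ ↦ ?_⟩
  · exact Submodule.mem_orthogonal_singleton_iff_inner_right.mp
      (Submodule.starProjection_apply_mem _ _)
  · rw [Ne, starProjection_orthogonal_eq_zero_iff, Submodule.mem_span_singleton]
    rintro ⟨c, hc⟩
    exact hxp c hc.symm
  · simp only [← InnerProductGeometry.cos_angle]
    exact cos_angle_le_cos_angle_starProjection _ _
      (Submodule.mem_orthogonal_singleton_iff_inner_right.mpr hy)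
end

section
/- Let E be a real inner product space, let a ∈ E with a ≠ 0, and let p, x ∈ E be such that x − p is not a scalar multiple of a. Set y* = x − (⟪a, x − p⟫ / ‖a‖²) • a, and let ∠ denote the angle between x − p and y* − p, defined by cos ∠ = ⟪x − p, y* − p⟫/(‖x − p‖·‖y* − p‖) with ∠ ∈ [0, π]. Then sin(∠) · ‖x − p‖ = |⟪a, x − p⟫| / ‖a‖. In particular, the sine of the angle at the maximizing point times the distance from x to p equals the margin distance from x to the hyperplane {y : ⟪a, y − p⟫ = 0}. -/
open RealInnerProductSpace

theorem norm_starProjection_span_singleton {𝕜 E : Type*} [RCLike 𝕜] [NormedAddCommGroup E]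
    [InnerProductSpace 𝕜 E] (a u : E) :
    ‖(𝕜 ∙ a).starProjection u‖ = ‖inner 𝕜 a u‖ / ‖a‖ := by
  rw [Submodule.starProjection_singleton, norm_smul, norm_div, RCLike.norm_ofReal,
    abs_of_nonneg (by positivity)]
  field_simp

-- In the right triangle with hypotenuse `u` and legs `u - K.starProjection u` and
-- `K.starProjection u`, the second leg is opposite to the angle.
theorem sin_angle_sub_starProjection_mul_norm {E : Type*} [NormedAddCommGroup E]
    [InnerProductSpace ℝ E] (K : Submodule ℝ E) [K.HasOrthogonalProjection] (u : E) :
    Real.sin (InnerProductGeometry.angle u (u - K.starProjection u)) * ‖u‖ =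
      ‖K.starProjection u‖ := by
  have legs_orthogonal : ⟪u - K.starProjection u, K.starProjection u⟫ = 0 :=
    K.starProjection_inner_eq_zero u _ (K.starProjection_apply_mem u)
  rw [InnerProductGeometry.angle_comm]
  simpa only [sub_add_cancel] using
    InnerProductGeometry.sin_angle_add_mul_norm_of_inner_eq_zero legs_orthogonal

/-- **Trigonometric reformulation of the Euclidean margin distance.**
With `y* = x - (⟪a, x - p⟫ / ‖a‖²) • a` and the angle `∠ ∈ [0, π]` between
`x - p` and `y* - p` given by
`∠ = arccos (⟪x - p, y* - p⟫ / (‖x - p‖ ⬝ ‖y* - p‖))`, one has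
`sin ∠ ⬝ ‖x - p‖ = |⟪a, x - p⟫| / ‖a‖`. -/
theorem sin_angle_mul_dist_eq_margin_distance
    {E : Type*} [NormedAddCommGroup E] [InnerProductSpace ℝ E]
    (a p x : E) (ha : a ≠ 0) (hxp : ∀ c : ℝ, x - p ≠ c • a)
    (ystar : E) (hystar : ystar = x - (⟪a, x - p⟫ / ‖a‖ ^ 2) • a)
    (angle : ℝ)
    (hangle : angle =
      Real.arccos (⟪x - p, ystar - p⟫ / (‖x - p‖ * ‖ystar - p‖))) :
    Real.sin angle * ‖x - p‖ = |⟪a, x - p⟫| / ‖a‖ := by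
  have ystar_sub : ystar - p = (x - p) - (ℝ ∙ a).starProjection (x - p) := by
    rw [hystar, Submodule.starProjection_singleton, sub_right_comm, RCLike.ofReal_real_eq_id, id]
  have angle_eq : angle = InnerProductGeometry.angle (x - p) (ystar - p) := hangle
  rw [angle_eq, ystar_sub, sin_angle_sub_starProjection_mul_norm,
    norm_starProjection_span_singleton, Real.norm_eq_abs]
end

section
/- Let P be an n × n real symmetric positive definite matrix, and let V, G, H, K be n × n real matrices. Suppose X, G′, Y are n × n real matrices satisfying the Lyapunov equations X·P + P·X = V, G′·P + P·G′ = G, and Y·P + P·Y = K − X·H − H·X. Then trace(G·Y) = trace(G′·K) − trace((X·G′ + G′·X)·H). Consequently, if G is the gradient of a loss with respect to X = L_P[V], then the gradients with respect to V and P are L_P[G] and −X·L_P[G] − L_P[G]·X, respectively. -/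
open Matrix

theorem trace_anticommutator_mul {ι R : Type*} [Fintype ι] [NonUnitalCommSemiring R]
    (A B C : Matrix ι ι R) :
    ((A * C + C * A) * B).trace = (A * (B * C + C * B)).trace := by
  have cyclic : (C * A * B).trace = (A * (B * C)).trace := by
    rw [← trace_mul_cycle, Matrix.mul_assoc]
  rw [Matrix.add_mul, Matrix.mul_add, trace_add, trace_add, cyclic, Matrix.mul_assoc, add_comm]

theorem lyapunov_backprop_general {ι R : Type*} [Fintype ι] [NonUnitalCommRing R]
    {P G H K X G' Y : Matrix ι ι R}
    (hG' : G' * P + P * G' = G)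
    (hY : Y * P + P * Y = K - X * H - H * X) :
    (G * Y).trace = (G' * K).trace - ((X * G' + G' * X) * H).trace := by
  -- `A ↦ A * C + C * A` is self-adjoint for the trace pairing; take `C = P`, then `C = X`.
  calc (G * Y).trace
      = (G' * (Y * P + P * Y)).trace := by rw [← hG', trace_anticommutator_mul]
    _ = (G' * K).trace - (G' * (H * X + X * H)).trace := by
      rw [hY, sub_sub, add_comm (X * H), Matrix.mul_sub, trace_sub]
    _ = (G' * K).trace - ((X * G' + G' * X) * H).trace := by
      rw [← trace_anticommutator_mul, add_comm (X * G')]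

/-- **Backpropagation of the Lyapunov operator.**
With `X·P + P·X = V`, `G′·P + P·G′ = G` (i.e. `G′ = L_P[G]`), and
`Y·P + P·Y = K − X·H − H·X`, one has
`tr(G·Y) = tr(G′·K) − tr((X·G′ + G′·X)·H)`; hence the gradients w.r.t. `V`
and `P` are `L_P[G]` and `−X·L_P[G] − L_P[G]·X`. -/
theorem lyapunov_backprop
    (n : ℕ) (P V G H K X G' Y : Matrix (Fin n) (Fin n) ℝ)
    (hP : P.PosDef)
    (hX : X * P + P * X = V)
    (hG' : G' * P + P * G' = G)
    (hY : Y * P + P * Y = K - X * H - H * X) :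
    (G * Y).trace = (G' * K).trace - ((X * G' + G' * X) * H).trace :=
  lyapunov_backprop_general hG' hY
end
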